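/- For every δ ≥ 0, the total variation distance between the data distribution and the forward marginal at time δ under the absorbing rate satisfies (1/2) · ∑_{x ∈ X} |q_δ x − q0 x| ≤ d · (1 − exp(−δ)), and hence is at most d · δ. -/

import Mathlib

open Finset

/-- Per-token absorbing transition kernel. -/
noncomputable def absK (S : ℕ) (m : Fin S) (t : ℝ) (a b : Fin S) : ℝ :=
  if a = b then (if a = m then 1 else Real.exp (-t))
  else (if b = m then 1 - Real.exp (-t) else 0)

/-- Forward marginal at time `t` of the absorbing diffusion started at `q0`. -/
noncomputable def fwd (S d : ℕ) (m : Fin S) (q0 : (Fin d → Fin S) → ℝ) (t : ℝ)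
    (x : Fin d → Fin S) : ℝ :=
  ∑ x0 : Fin d → Fin S, q0 x0 * ∏ i : Fin d, absK S m t (x0 i) (x i)

/-- Number of masked coordinates. -/
def nmask (S d : ℕ) (m : Fin S) (x : Fin d → Fin S) : ℕ :=
  (Finset.univ.filter (fun i => x i = m)).card

theorem absK_nonneg (S : ℕ) (m : Fin S) (t : ℝ) (ht : 0 ≤ t) (a b : Fin S) :
    0 ≤ absK S m t a b := by
  have h1 : Real.exp (-t) ≤ 1 := Real.exp_le_one_iff.2 (by linarith)
  have h2 := Real.exp_pos (-t)
  unfold absK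
  split_ifs <;> linarith

theorem absK_sum (S : ℕ) (m : Fin S) (t : ℝ) (a : Fin S) :
    ∑ b, absK S m t a b = 1 := by
  by_cases h : a = m
  · subst h
    have : ∀ b, absK S a t a b = if a = b then 1 else 0 := by
      intro b
      unfold absK
      split_ifs <;> simp_all
    simp [this]
  · have : ∀ b, absK S m t a b =
        (if a = b then Real.exp (-t) else 0) + (if m = b then 1 - Real.exp (-t) else 0) := by
      intro b
      unfold absK
      split_ifs <;> grind
    simp [this, Finset.sum_add_distrib]

theorem absK_diag (S : ℕ) (m : Fin S) (t : ℝ) (ht : 0 ≤ t) (a : Fin S) :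
    Real.exp (-t) ≤ absK S m t a a ∧ absK S m t a a ≤ 1 := by
  have h1 : Real.exp (-t) ≤ 1 := Real.exp_le_one_iff.2 (by linarith)
  unfold absK
  split_ifs <;> simp_all

theorem prodK_sum (S d : ℕ) (m : Fin S) (t : ℝ) (x0 : Fin d → Fin S) :
    ∑ x : Fin d → Fin S, ∏ i, absK S m t (x0 i) (x i) = 1 := by
  rw [← Fintype.prod_sum (fun i b => absK S m t (x0 i) b)]
  simp [absK_sum]

theorem prodK_tv (S d : ℕ) (m : Fin S) (t : ℝ) (ht : 0 ≤ t) (x0 : Fin d → Fin S) :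
    ∑ x : Fin d → Fin S, |(∏ i, absK S m t (x0 i) (x i)) - (if x0 = x then 1 else 0)|
      ≤ 2 * (d * (1 - Real.exp (-t))) := by
  have hd1 : ∏ i, absK S m t (x0 i) (x0 i) ≤ 1 :=
    Finset.prod_le_one (fun i _ => absK_nonneg S m t ht _ _) (fun i _ => (absK_diag S m t ht _).2)
  have hd2 : Real.exp (-t) ^ d ≤ ∏ i, absK S m t (x0 i) (x0 i) := by
    have := Finset.prod_le_prod (s := (Finset.univ : Finset (Fin d)))
      (f := fun _ => Real.exp (-t)) (g := fun i => absK S m t (x0 i) (x0 i))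
      (fun i _ => (Real.exp_pos _).le) (fun i _ => (absK_diag S m t ht _).1)
    simpa using this
  have hb := one_add_mul_sub_le_pow (a := Real.exp (-t))
    (by linarith [Real.exp_pos (-t)]) d
  have key : ∀ x : Fin d → Fin S,
      |(∏ i, absK S m t (x0 i) (x i)) - (if x0 = x then 1 else 0)| =
      (∏ i, absK S m t (x0 i) (x i)) +
        (if x0 = x then 1 - 2 * ∏ i, absK S m t (x0 i) (x0 i) else 0) := by
    intro x
    split_ifs with h
    · subst h
      rw [abs_of_nonpos (by linarith)]
      ring
    · rw [sub_zero, add_zero, abs_of_nonneg]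
      exact Finset.prod_nonneg (fun i _ => absK_nonneg S m t ht _ _)
  simp only [key, Finset.sum_add_distrib, prodK_sum, Finset.sum_ite_eq, Finset.mem_univ, if_true]
  linarith

/-- Early-stopping total-variation bound under the absorbing rate:
`TV(q_0, q_δ) ≤ d (1 - e^{-δ}) ≤ d δ`. -/
theorem absorbing_early_stopping_TV_bound (S d : ℕ) (hS : 2 ≤ S) (hd : 1 ≤ d) (m : Fin S)
    (q0 : (Fin d → Fin S) → ℝ) (hq0 : ∀ x, 0 ≤ q0 x)
    (hq0sum : ∑ x : Fin d → Fin S, q0 x = 1) :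
    ∀ δ : ℝ, 0 ≤ δ →
      (1 / 2) * ∑ x : Fin d → Fin S, |fwd S d m q0 δ x - q0 x|
          ≤ (d : ℝ) * (1 - Real.exp (-δ)) ∧
      (1 / 2) * ∑ x : Fin d → Fin S, |fwd S d m q0 δ x - q0 x| ≤ (d : ℝ) * δ := by
  intro δ hδ
  have h1 : (1 / 2) * ∑ x : Fin d → Fin S, |fwd S d m q0 δ x - q0 x|
      ≤ (d : ℝ) * (1 - Real.exp (-δ)) := by
    have hx : ∀ x, |fwd S d m q0 δ x - q0 x| ≤ ∑ x0 : Fin d → Fin S, q0 x0 *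
        |(∏ i, absK S m δ (x0 i) (x i)) - (if x0 = x then 1 else 0)| := by
      intro x
      have : fwd S d m q0 δ x - q0 x = ∑ x0 : Fin d → Fin S, q0 x0 *
        ((∏ i, absK S m δ (x0 i) (x i)) - (if x0 = x then 1 else 0)) := by
        simp [fwd, mul_sub, Finset.sum_sub_distrib]
      rw [this]
      refine (Finset.abs_sum_le_sum_abs _ _).trans (le_of_eq ?_)
      refine Finset.sum_congr rfl fun x0 _ => ?_
      rw [abs_mul, abs_of_nonneg (hq0 x0)]
    have h2 : ∑ x : Fin d → Fin S, |fwd S d m q0 δ x - q0 x|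
        ≤ 2 * (d * (1 - Real.exp (-δ))) := by
      refine (Finset.sum_le_sum fun x _ => hx x).trans ?_
      rw [Finset.sum_comm]
      simp only [← Finset.mul_sum]
      refine (Finset.sum_le_sum fun x0 _ =>
        mul_le_mul_of_nonneg_left (prodK_tv S d m δ hδ x0) (hq0 x0)).trans ?_
      rw [← Finset.sum_mul, hq0sum, one_mul]
    linarith
  refine ⟨h1, h1.trans (mul_le_mul_of_nonneg_left ?_ (Nat.cast_nonneg d))⟩
  linarith [Real.add_one_le_exp (-δ)]
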